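/- For trace-class operators: if 0 ≤ Aₙ, Aₙ ⇀ A weakly-* in the trace class, and limsupₙ tr Aₙ ≤ tr A, then Aₙ → A strongly in trace norm. -/

import Mathlib

set_option synthInstance.maxHeartbeats 1000000
set_option maxHeartbeats 1000000

open Filter

variable {H : Type*} [NormedAddCommGroup H] [InnerProductSpace ℂ H] [CompleteSpace H]

/-- The trace `∑ᵢ ⟨eᵢ, A eᵢ⟩` of an operator w.r.t. a Hilbert basis `e` (basis independent
on trace-class operators). -/
noncomputable def opTrace (e : HilbertBasis ℕ ℂ H) (A : H →L[ℂ] H) : ℂ :=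
  ∑' i, inner (𝕜 := ℂ) (e i) (A (e i))

/-- The trace norm `tr |A| = tr √(A⋆A)`, computed in the Hilbert basis `e`. -/
noncomputable def traceNorm (e : HilbertBasis ℕ ℂ H) (A : H →L[ℂ] H) : ℝ :=
  ∑' i, (inner (𝕜 := ℂ) (e i) ((CFC.sqrt (star A * A)) (e i))).re

/-!
Write `d_B i = ⟨eᵢ, B eᵢ⟩` for the diagonal of `B` and put `Tₙ = Aₙ - A`, `Bₙ = Aₙ + A`. By
Cauchy–Schwarz for positive forms, `|⟨x, Tₙ y⟩|² ≤ ⟨x, Bₙ x⟩ ⟨y, Bₙ y⟩`. By the uniform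
boundedness principle the traces `tr Aₙ` are bounded, so `limsup tr Aₙ ≤ tr A` together with
`d_{Aₙ} → d_A` pointwise prevents the mass of `d_{Bₙ}` from escaping to infinity. Two consequences
of the domination of `Tₙ` by `Bₙ` then finish the proof:

* `∑_{j ∈ t} |⟨eⱼ, Tₙ eᵢ⟩|² ≤ tr Bₙ · ∑_{j ∈ t} d_{Bₙ} j` upgrades the convergence of the matrix
  entries to `Tₙ eᵢ → 0` in norm, so every diagonal entry of `|Tₙ|` tends to `0`;
* writing `|Tₙ| = X Tₙ` with `‖X‖ ≤ 1`, Hölder's inequality gives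
  `∑_{i ∈ t} ⟨eᵢ, |Tₙ| eᵢ⟩ ≤ (tr Bₙ · ∑_{i ∈ t} d_{Bₙ} i)^{1/2}`, so no mass of `|Tₙ|` escapes.
-/

section Tightness

variable {α ι : Type*} {l : Filter α} {f g : α → ι → ℝ}

/-- A family of real series `∑ᵢ f n i` is tight along `l` if, eventually along `l`, its sums over
finite sets disjoint from a suitable finite set are uniformly small. Finite sets are used so that
no summability is presupposed. -/
def IsTightAlong (f : α → ι → ℝ) (l : Filter α) : Prop :=
  ∀ ε > 0, ∃ s : Finset ι, ∀ᶠ n in l, ∀ t : Finset ι, Disjoint t s → ∑ i ∈ t, f n i ≤ ε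

theorem IsTightAlong.tendsto_tsum_zero (hf : ∀ n i, 0 ≤ f n i) (htight : IsTightAlong f l)
    (hlim : ∀ i, Tendsto (fun n => f n i) l (nhds 0)) :
    Tendsto (fun n => ∑' i, f n i) l (nhds 0) := by
  classical
  refine tendsto_order.2 ⟨fun a ha => .of_forall fun n => ha.trans_le (tsum_nonneg (hf n)),
    fun ε hε => ?_⟩
  obtain ⟨s, hs⟩ := htight (ε / 3) (by positivity)
  have hsum : Tendsto (fun n => ∑ i ∈ s, f n i) l (nhds 0) := by
    simpa using tendsto_finsetSum s fun i _ => hlim i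
  filter_upwards [hs, hsum.eventually (gt_mem_nhds (show 0 < ε / 3 by positivity))]
    with n htail hhead
  refine (Real.tsum_le_of_sum_le (c := ε / 3 + ε / 3) (hf n) fun t => ?_).trans_lt (by linarith)
  calc ∑ i ∈ t, f n i = ∑ i ∈ t ∩ s, f n i + ∑ i ∈ t \ s, f n i :=
        (Finset.sum_inter_add_sum_sdiff t s _).symm
    _ ≤ ∑ i ∈ s, f n i + ε / 3 := by
        refine add_le_add ?_ (htail _ Finset.sdiff_disjoint)
        exact Finset.sum_le_sum_of_subset_of_nonneg Finset.inter_subset_right fun i _ _ => hf n i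
    _ ≤ ε / 3 + ε / 3 := by gcongr

theorem IsTightAlong.of_sum_le (hg : ∀ n i, 0 ≤ g n i) (htight : IsTightAlong g l) {φ : ℝ → ℝ}
    (hφ : Tendsto φ (nhds 0) (nhds 0))
    (hfg : ∀ᶠ n in l, ∀ t : Finset ι, ∑ i ∈ t, f n i ≤ φ (∑ i ∈ t, g n i)) :
    IsTightAlong f l := by
  intro ε hε
  obtain ⟨δ, hδ, hφδ⟩ := Metric.eventually_nhds_iff.1 (hφ.eventually (gt_mem_nhds hε))
  obtain ⟨s, hs⟩ := htight (δ / 2) (half_pos hδ)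
  refine ⟨s, ?_⟩
  filter_upwards [hs, hfg] with n hsmall hle t ht
  refine (hle t).trans (hφδ ?_).le
  rw [Real.dist_0_eq_abs, abs_of_nonneg (Finset.sum_nonneg fun i _ => hg n i)]
  linarith [hsmall t ht]

theorem isTightAlong_of_eventually_tsum_lt {f₀ : ι → ℝ} (hf : ∀ n i, 0 ≤ f n i)
    (hsum : ∀ n, Summable (f n)) (hsum₀ : Summable f₀)
    (hlim : ∀ i, Tendsto (fun n => f n i) l (nhds (f₀ i)))
    (hmass : ∀ ε > 0, ∀ᶠ n in l, ∑' i, f n i < ∑' i, f₀ i + ε) :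
    IsTightAlong f l := by
  classical
  intro ε hε
  have hε' : 0 < ε / 3 := by positivity
  obtain ⟨s, hs⟩ := (hsum₀.hasSum.eventually (lt_mem_nhds (sub_lt_self _ hε'))).exists
  have hhead := (tendsto_finsetSum s fun i _ => hlim i).eventually
    (lt_mem_nhds (sub_lt_self _ hε'))
  refine ⟨s, ?_⟩
  filter_upwards [hmass _ hε', hhead] with n htotal hhead t ht
  have hsplit : ∑ i ∈ t, f n i + ∑ i ∈ s, f n i ≤ ∑' i, f n i := by
    rw [← Finset.sum_union ht]
    exact (hsum n).sum_le_tsum _ fun i _ => hf n i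
  linarith

end Tightness

section HilbertSpace

variable {𝕜 E F G : Type*} [RCLike 𝕜]
  [NormedAddCommGroup E] [InnerProductSpace 𝕜 E]
  [NormedAddCommGroup F] [InnerProductSpace 𝕜 F]
  [NormedAddCommGroup G] [InnerProductSpace 𝕜 G]

theorem hasSum_norm_inner_sq {ι : Type*} (e : HilbertBasis ι 𝕜 E) (x : E) :
    HasSum (fun i => ‖inner 𝕜 (e i) x‖ ^ 2) (‖x‖ ^ 2) := by
  rw [← RCLike.hasSum_ofReal 𝕜]
  convert! e.hasSum_inner_mul_inner x x using 1
  · ext i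
    rw [norm_inner_symm, ← inner_conj_symm (e i) x, RCLike.mul_conj, RCLike.ofReal_pow]
  · rw [inner_self_eq_norm_sq_to_K, RCLike.ofReal_pow]

theorem sum_norm_adjoint_apply_sq_le_tsum [CompleteSpace E] [CompleteSpace F] {ι κ : Type*}
    (e : HilbertBasis ι 𝕜 E) {v : κ → F} (hv : Orthonormal 𝕜 v) {Y : E →L[𝕜] F}
    (hY : Summable fun j => ‖Y (e j)‖ ^ 2) (t : Finset κ) :
    ∑ i ∈ t, ‖ContinuousLinearMap.adjoint Y (v i)‖ ^ 2 ≤ ∑' j, ‖Y (e j)‖ ^ 2 := by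
  have hrows := hasSum_sum (s := t) fun i _ =>
    hasSum_norm_inner_sq e (ContinuousLinearMap.adjoint Y (v i))
  refine hasSum_le (fun j => ?_) hrows hY.hasSum
  simp only [ContinuousLinearMap.adjoint_inner_right, norm_inner_symm (Y (e j))]
  exact hv.sum_inner_products_le _

/-- Douglas' factorization lemma. -/
theorem exists_norm_le_one_comp_eq [CompleteSpace F] [CompleteSpace G] {S : E →L[𝕜] G}
    {T : E →L[𝕜] F} (hST : ∀ x, ‖S x‖ ≤ ‖T x‖) : ∃ X : F →L[𝕜] G, ‖X‖ ≤ 1 ∧ X ∘L T = S := by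
  let V : Submodule 𝕜 F := T.range.topologicalClosure
  have hTV : ∀ x, T x ∈ V := fun x => Submodule.le_topologicalClosure _ ⟨x, rfl⟩
  let T' : E →ₗ[𝕜] V := T.toLinearMap.codRestrict V hTV
  have hdense : DenseRange T' := by
    rw [DenseRange, Subtype.dense_iff]
    have himage : (↑) '' Set.range T' = Set.range T := (Set.range_comp (Subtype.val) T').symm
    exact himage ▸ subset_rfl
  have hbound : ∀ x, ‖S x‖ ≤ 1 * ‖T' x‖ := by simpa [T'] using hST
  have hVcomplete : CompleteSpace V := T.range.isClosed_topologicalClosure.completeSpace_coe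
  refine ⟨S.toLinearMap.extendOfNorm T' ∘L V.orthogonalProjectionOnto, ?_, ?_⟩
  · refine (ContinuousLinearMap.opNorm_comp_le _ _).trans (mul_le_one₀ ?_ (norm_nonneg _) ?_)
    · exact LinearMap.opNorm_extendOfNorm_le hdense zero_le_one hbound
    · exact V.orthogonalProjectionOnto_norm_le
  · ext x
    have hproj : V.orthogonalProjectionOnto (T x) = T' x :=
      V.orthogonalProjectionOnto_mem_subspace_eq_self (T' x)
    simpa [hproj] using LinearMap.extendOfNorm_eq hdense ⟨1, hbound⟩ x

theorem norm_sum_rankOne_self_le_one {ι : Type*} {v : ι → E} (hv : Orthonormal 𝕜 v)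
    (s : Finset ι) : ‖∑ i ∈ s, InnerProductSpace.rankOne 𝕜 (v i) (v i)‖ ≤ 1 := by
  refine ContinuousLinearMap.opNorm_le_bound _ zero_le_one fun x => ?_
  rw [one_mul, ← sq_le_sq₀ (norm_nonneg _) (norm_nonneg x)]
  calc ‖(∑ i ∈ s, InnerProductSpace.rankOne 𝕜 (v i) (v i)) x‖ ^ 2
      = ∑ i ∈ s, ‖inner 𝕜 (v i) x‖ ^ 2 := by
        simpa [sum_apply]
          using hv.orthogonalFamily.norm_sum (fun i => inner 𝕜 (v i) x) s
    _ ≤ ‖x‖ ^ 2 := hv.sum_inner_products_le x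

theorem isCompactOperator_rankOne (x : E) (y : F) :
    IsCompactOperator (InnerProductSpace.rankOne 𝕜 x y) := by
  rw [InnerProductSpace.rankOne_def', ContinuousLinearMap.coe_comp]
  exact (isCompactOperator_of_locallyCompactSpace_rng
    (ContinuousLinearMap.toSpanSingleton 𝕜 x)).comp_clm _

end HilbertSpace

theorem norm_sqrt_apply_sq {B : H →L[ℂ] H} (hB : B.IsPositive) (x : H) :
    ‖CFC.sqrt B x‖ ^ 2 = (inner ℂ x (B x)).re := by
  have hsa : IsSelfAdjoint (CFC.sqrt B) := (CFC.sqrt_nonneg B).isSelfAdjoint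
  rw [ContinuousLinearMap.apply_norm_sq_eq_inner_adjoint_right, hsa.adjoint_eq,
    ← ContinuousLinearMap.mul_def,
    CFC.sqrt_mul_sqrt_self B ((ContinuousLinearMap.nonneg_iff_isPositive B).2 hB)]
  rfl

theorem norm_abs_apply (T : H →L[ℂ] H) (x : H) : ‖CFC.abs T x‖ = ‖T x‖ := by
  have hpos : (star T * T).IsPositive := ContinuousLinearMap.isPositive_adjoint_comp_self T
  rw [← sq_eq_sq₀ (norm_nonneg _) (norm_nonneg _), CFC.abs, norm_sqrt_apply_sq hpos,
    ContinuousLinearMap.apply_norm_sq_eq_inner_adjoint_right T x]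
  rfl

theorem isPositive_abs (T : H →L[ℂ] H) : (CFC.abs T).IsPositive :=
  (ContinuousLinearMap.nonneg_iff_isPositive _).1 (CFC.abs_nonneg T)

/-- `T` is dominated by the positive operator `B` in the sense of quadratic forms, i.e. the block
operator `[[B, T], [T⋆, B]]` is positive; this is encoded as a Cauchy–Schwarz inequality. -/
def FormDominated (T B : H →L[ℂ] H) : Prop :=
  ∀ x y, ‖inner ℂ x (T y)‖ ≤ √(inner ℂ x (B x)).re * √(inner ℂ y (B y)).re

theorem formDominated_self {B : H →L[ℂ] H} (hB : B.IsPositive) : FormDominated B B := by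
  intro x y
  have hsa : IsSelfAdjoint (CFC.sqrt B) := (CFC.sqrt_nonneg B).isSelfAdjoint
  have hfactor : inner ℂ x (B y) = inner ℂ (CFC.sqrt B x) (CFC.sqrt B y) := by
    conv_lhs =>
      rw [← CFC.sqrt_mul_sqrt_self B ((ContinuousLinearMap.nonneg_iff_isPositive B).2 hB)]
    exact (hsa.isSymmetric x (CFC.sqrt B y)).symm
  rw [← norm_sqrt_apply_sq hB, ← norm_sqrt_apply_sq hB, Real.sqrt_sq (norm_nonneg _),
    Real.sqrt_sq (norm_nonneg _), hfactor]
  exact norm_inner_le_norm _ _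

theorem formDominated_sub_add {A B : H →L[ℂ] H} (hA : A.IsPositive) (hB : B.IsPositive) :
    FormDominated (A - B) (A + B) := by
  intro x y
  have hA₀ : ∀ z, 0 ≤ (inner ℂ z (A z)).re := hA.re_inner_nonneg_right
  have hB₀ : ∀ z, 0 ≤ (inner ℂ z (B z)).re := hB.re_inner_nonneg_right
  calc ‖inner ℂ x ((A - B) y)‖
      ≤ ‖inner ℂ x (A y)‖ + ‖inner ℂ x (B y)‖ := by
        rw [sub_apply, inner_sub_right]
        exact norm_sub_le _ _
    _ ≤ √(inner ℂ x (A x)).re * √(inner ℂ y (A y)).re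
          + √(inner ℂ x (B x)).re * √(inner ℂ y (B y)).re :=
        add_le_add (formDominated_self hA x y) (formDominated_self hB x y)
    _ ≤ √((inner ℂ x (A x)).re + (inner ℂ x (B x)).re)
          * √((inner ℂ y (A y)).re + (inner ℂ y (B y)).re) := by
        simpa using Real.sum_sqrt_mul_sqrt_le Finset.univ
          (f := ![(inner ℂ x (A x)).re, (inner ℂ x (B x)).re])
          (g := ![(inner ℂ y (A y)).re, (inner ℂ y (B y)).re])
          (by simp [Fin.forall_fin_two, hA₀, hB₀]) (by simp [Fin.forall_fin_two, hA₀, hB₀])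
    _ = √(inner ℂ x ((A + B) x)).re * √(inner ℂ y ((A + B) y)).re := by
        simp only [add_apply, inner_add_right, Complex.add_re]

/-- The `i`-th diagonal entry of `B` in the basis `e`. Only its real part is kept, which is the
whole entry when `B` is positive. -/
noncomputable def opDiag {ι : Type*} (e : HilbertBasis ι ℂ H) (B : H →L[ℂ] H) (i : ι) : ℝ :=
  (inner ℂ (e i) (B (e i))).re

section Diagonal

variable {ι : Type*} {e : HilbertBasis ι ℂ H} {B T : H →L[ℂ] H}

omit [CompleteSpace H] in
theorem opDiag_nonneg (e : HilbertBasis ι ℂ H) (hB : B.IsPositive) (i : ι) : 0 ≤ opDiag e B i :=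
  hB.re_inner_nonneg_right (e i)

omit [CompleteSpace H] in
theorem opDiag_add (e : HilbertBasis ι ℂ H) (A B : H →L[ℂ] H) :
    opDiag e (A + B) = opDiag e A + opDiag e B := by
  ext i
  simp only [opDiag, add_apply, inner_add_right, Complex.add_re, Pi.add_apply]

theorem sum_re_inner_apply_le {κ : Type*} {v : κ → H} (hv : Orthonormal ℂ v) (hB : B.IsPositive)
    (hsum : Summable (opDiag e B)) (X : H →L[ℂ] H) (t : Finset κ) :
    ∑ i ∈ t, (inner ℂ (X (v i)) (B (X (v i)))).re ≤ ‖X‖ ^ 2 * ∑' j, opDiag e B j := by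
  let Y : H →L[ℂ] H := ContinuousLinearMap.adjoint X ∘L CFC.sqrt B
  have hsa : IsSelfAdjoint (CFC.sqrt B) := (CFC.sqrt_nonneg B).isSelfAdjoint
  have hY_adjoint : ContinuousLinearMap.adjoint Y = CFC.sqrt B ∘L X := by
    rw [ContinuousLinearMap.adjoint_comp, hsa.adjoint_eq, ContinuousLinearMap.adjoint_adjoint]
  have hY_le : ∀ j, ‖Y (e j)‖ ^ 2 ≤ ‖X‖ ^ 2 * opDiag e B j := fun j => by
    calc ‖Y (e j)‖ ^ 2 ≤ (‖X‖ * ‖CFC.sqrt B (e j)‖) ^ 2 := by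
          gcongr
          simpa [Y] using (ContinuousLinearMap.adjoint X).le_opNorm (CFC.sqrt B (e j))
      _ = ‖X‖ ^ 2 * opDiag e B j := by rw [mul_pow, norm_sqrt_apply_sq hB]; rfl
  have hY : Summable fun j => ‖Y (e j)‖ ^ 2 :=
    (hsum.mul_left _).of_nonneg_of_le (fun _ => sq_nonneg _) hY_le
  calc ∑ i ∈ t, (inner ℂ (X (v i)) (B (X (v i)))).re
      = ∑ i ∈ t, ‖ContinuousLinearMap.adjoint Y (v i)‖ ^ 2 := by
        simp only [hY_adjoint, ContinuousLinearMap.comp_apply, norm_sqrt_apply_sq hB]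
    _ ≤ ∑' j, ‖Y (e j)‖ ^ 2 := sum_norm_adjoint_apply_sq_le_tsum e hv hY t
    _ ≤ ∑' j, ‖X‖ ^ 2 * opDiag e B j := hY.tsum_le_tsum hY_le (hsum.mul_left _)
    _ = ‖X‖ ^ 2 * ∑' j, opDiag e B j := tsum_mul_left

theorem FormDominated.sum_norm_inner_apply_le (hT : FormDominated T B) (hB : B.IsPositive)
    (hsum : Summable (opDiag e B)) (X : H →L[ℂ] H) (t : Finset ι) :
    ∑ i ∈ t, ‖inner ℂ (X (e i)) (T (e i))‖
      ≤ ‖X‖ * √(∑' i, opDiag e B i) * √(∑ i ∈ t, opDiag e B i) := by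
  calc ∑ i ∈ t, ‖inner ℂ (X (e i)) (T (e i))‖
      ≤ ∑ i ∈ t, √(inner ℂ (X (e i)) (B (X (e i)))).re * √(opDiag e B i) :=
        Finset.sum_le_sum fun i _ => hT _ _
    _ ≤ √(∑ i ∈ t, (inner ℂ (X (e i)) (B (X (e i)))).re) * √(∑ i ∈ t, opDiag e B i) :=
        Real.sum_sqrt_mul_sqrt_le t (fun _ => hB.re_inner_nonneg_right _) (opDiag_nonneg e hB)
    _ ≤ √(‖X‖ ^ 2 * ∑' i, opDiag e B i) * √(∑ i ∈ t, opDiag e B i) := by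
        gcongr
        exact sum_re_inner_apply_le e.orthonormal hB hsum X t
    _ = ‖X‖ * √(∑' i, opDiag e B i) * √(∑ i ∈ t, opDiag e B i) := by
        rw [Real.sqrt_mul (sq_nonneg _), Real.sqrt_sq (norm_nonneg _)]

theorem FormDominated.sum_opDiag_abs_le (hT : FormDominated T B) (hB : B.IsPositive)
    (hsum : Summable (opDiag e B)) (t : Finset ι) :
    ∑ i ∈ t, opDiag e (CFC.abs T) i ≤ √(∑' i, opDiag e B i) * √(∑ i ∈ t, opDiag e B i) := by
  obtain ⟨X, hX, hXT⟩ := exists_norm_le_one_comp_eq fun x => (norm_abs_apply T x).le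
  have hdiag : ∀ i, opDiag e (CFC.abs T) i
      ≤ ‖inner ℂ (ContinuousLinearMap.adjoint X (e i)) (T (e i))‖ := fun i => by
    rw [ContinuousLinearMap.adjoint_inner_left, ← ContinuousLinearMap.comp_apply, hXT]
    exact Complex.re_le_norm _
  calc ∑ i ∈ t, opDiag e (CFC.abs T) i
      ≤ ∑ i ∈ t, ‖inner ℂ (ContinuousLinearMap.adjoint X (e i)) (T (e i))‖ :=
        Finset.sum_le_sum fun i _ => hdiag i
    _ ≤ ‖ContinuousLinearMap.adjoint X‖ * √(∑' i, opDiag e B i) * √(∑ i ∈ t, opDiag e B i) :=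
        hT.sum_norm_inner_apply_le hB hsum _ t
    _ ≤ 1 * √(∑' i, opDiag e B i) * √(∑ i ∈ t, opDiag e B i) := by
        gcongr
        rwa [LinearIsometryEquiv.norm_map]
    _ = √(∑' i, opDiag e B i) * √(∑ i ∈ t, opDiag e B i) := by rw [one_mul]

omit [CompleteSpace H] in
theorem FormDominated.sum_norm_inner_sq_le (hT : FormDominated T B) (hB : B.IsPositive)
    (hsum : Summable (opDiag e B)) (i : ι) (t : Finset ι) :
    ∑ j ∈ t, ‖inner ℂ (e j) (T (e i))‖ ^ 2 ≤ (∑' k, opDiag e B k) * ∑ j ∈ t, opDiag e B j := by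
  have hentry : ∀ j, ‖inner ℂ (e j) (T (e i))‖ ^ 2 ≤ opDiag e B i * opDiag e B j := fun j => by
    calc ‖inner ℂ (e j) (T (e i))‖ ^ 2 ≤ (√(opDiag e B j) * √(opDiag e B i)) ^ 2 := by
          gcongr
          exact hT _ _
      _ = opDiag e B i * opDiag e B j := by
          rw [mul_pow, Real.sq_sqrt (opDiag_nonneg e hB j), Real.sq_sqrt (opDiag_nonneg e hB i),
            mul_comm]
  calc ∑ j ∈ t, ‖inner ℂ (e j) (T (e i))‖ ^ 2 ≤ ∑ j ∈ t, opDiag e B i * opDiag e B j :=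
        Finset.sum_le_sum fun j _ => hentry j
    _ = opDiag e B i * ∑ j ∈ t, opDiag e B j := (Finset.mul_sum ..).symm
    _ ≤ (∑' k, opDiag e B k) * ∑ j ∈ t, opDiag e B j := by
        gcongr
        · exact Finset.sum_nonneg fun j _ => opDiag_nonneg e hB j
        · exact hsum.le_tsum i fun j _ => opDiag_nonneg e hB j

theorem sum_norm_inner_comp_le (hB : B.IsPositive) (hsum : Summable (opDiag e B))
    (K : H →L[ℂ] H) (t : Finset ι) :
    ∑ i ∈ t, ‖inner ℂ (e i) ((B ∘L K) (e i))‖ ≤ ‖K‖ * ∑' i, opDiag e B i := by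
  have hflip : ∀ i, ‖inner ℂ (e i) ((B ∘L K) (e i))‖ = ‖inner ℂ (K (e i)) (B (e i))‖ := fun i => by
    rw [ContinuousLinearMap.comp_apply, norm_inner_symm, hB.isSymmetric.apply_clm]
  have hsub : ∑ i ∈ t, opDiag e B i ≤ ∑' i, opDiag e B i :=
    hsum.sum_le_tsum t fun i _ => opDiag_nonneg e hB i
  calc ∑ i ∈ t, ‖inner ℂ (e i) ((B ∘L K) (e i))‖
      = ∑ i ∈ t, ‖inner ℂ (K (e i)) (B (e i))‖ := Finset.sum_congr rfl fun i _ => hflip i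
    _ ≤ ‖K‖ * √(∑' i, opDiag e B i) * √(∑ i ∈ t, opDiag e B i) :=
        (formDominated_self hB).sum_norm_inner_apply_le hB hsum K t
    _ ≤ ‖K‖ * √(∑' i, opDiag e B i) * √(∑' i, opDiag e B i) := by gcongr
    _ = ‖K‖ * ∑' i, opDiag e B i := by
        rw [mul_assoc, Real.mul_self_sqrt (tsum_nonneg (opDiag_nonneg e hB))]

end Diagonal

section FormDomination

variable {α ι : Type*} {l : Filter α} {T B : α → H →L[ℂ] H} {M : ℝ}

omit [CompleteSpace H] in
theorem tendsto_apply_zero_of_formDominated {e : HilbertBasis ι ℂ H}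
    (hTB : ∀ n, FormDominated (T n) (B n)) (hB : ∀ n, (B n).IsPositive)
    (hsum : ∀ n, Summable (opDiag e (B n))) (hM : ∀ᶠ n in l, ∑' i, opDiag e (B n) i ≤ M)
    (htight : IsTightAlong (fun n => opDiag e (B n)) l) {i : ι}
    (hT : ∀ j, Tendsto (fun n => inner ℂ (e j) (T n (e i))) l (nhds 0)) :
    Tendsto (fun n => T n (e i)) l (nhds 0) := by
  have hcol : IsTightAlong (fun n j => ‖inner ℂ (e j) (T n (e i))‖ ^ 2) l := by
    refine htight.of_sum_le (fun n => opDiag_nonneg e (hB n)) (φ := fun x => M * x)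
      ((continuous_const_mul M).tendsto' 0 0 (mul_zero M)) ?_
    filter_upwards [hM] with n hn t
    refine ((hTB n).sum_norm_inner_sq_le (hB n) (hsum n) i t).trans ?_
    exact mul_le_mul_of_nonneg_right hn (Finset.sum_nonneg fun j _ => opDiag_nonneg e (hB n) j)
  have hparseval : Tendsto (fun n => ‖T n (e i)‖ ^ 2) l (nhds 0) := by
    simp only [← (hasSum_norm_inner_sq e _).tsum_eq]
    refine hcol.tendsto_tsum_zero (fun _ _ => sq_nonneg _) fun j => ?_
    simpa using (hT j).norm.pow 2
  refine tendsto_zero_iff_norm_tendsto_zero.2 ?_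
  simpa [Real.sqrt_sq] using hparseval.sqrt

theorem tendsto_traceNorm_zero_of_formDominated {e : HilbertBasis ℕ ℂ H}
    (hTB : ∀ n, FormDominated (T n) (B n)) (hB : ∀ n, (B n).IsPositive)
    (hsum : ∀ n, Summable (opDiag e (B n))) (hM : ∀ᶠ n in l, ∑' i, opDiag e (B n) i ≤ M)
    (htight : IsTightAlong (fun n => opDiag e (B n)) l)
    (hT : ∀ i j, Tendsto (fun n => inner ℂ (e j) (T n (e i))) l (nhds 0)) :
    Tendsto (fun n => traceNorm e (T n)) l (nhds 0) := by
  have habs_tight : IsTightAlong (fun n => opDiag e (CFC.abs (T n))) l := by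
    refine htight.of_sum_le (fun n => opDiag_nonneg e (hB n)) (φ := fun x => √M * √x)
      ((continuous_const.mul Real.continuous_sqrt).tendsto' 0 0 (by simp)) ?_
    filter_upwards [hM] with n hn t
    refine ((hTB n).sum_opDiag_abs_le (hB n) (hsum n) t).trans ?_
    gcongr
  refine habs_tight.tendsto_tsum_zero (fun n => opDiag_nonneg e (isPositive_abs _)) fun i => ?_
  have hcol := tendsto_apply_zero_of_formDominated hTB hB hsum hM htight (hT i)
  refine squeeze_zero (fun n => opDiag_nonneg e (isPositive_abs _) i) (fun n => ?_)
    (tendsto_zero_iff_norm_tendsto_zero.1 hcol)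
  calc opDiag e (CFC.abs (T n)) i ≤ ‖inner ℂ (e i) (CFC.abs (T n) (e i))‖ := Complex.re_le_norm _
    _ ≤ ‖e i‖ * ‖CFC.abs (T n) (e i)‖ := norm_inner_le_norm _ _
    _ = ‖T n (e i)‖ := by rw [e.orthonormal.norm_eq_one, one_mul, norm_abs_apply]

theorem tendsto_traceNorm_sub_zero {e : HilbertBasis ℕ ℂ H} {A : α → H →L[ℂ] H}
    {A₀ : H →L[ℂ] H} (hA : ∀ n, (A n).IsPositive) (hA₀ : A₀.IsPositive)
    (hsum : ∀ n, Summable (opDiag e (A n))) (hsum₀ : Summable (opDiag e A₀))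
    (hentry : ∀ i j, Tendsto (fun n => inner ℂ (e j) (A n (e i))) l
      (nhds (inner ℂ (e j) (A₀ (e i)))))
    (hmass : ∀ ε > 0, ∀ᶠ n in l, ∑' i, opDiag e (A n) i < ∑' i, opDiag e A₀ i + ε) :
    Tendsto (fun n => traceNorm e (A n - A₀)) l (nhds 0) := by
  have hsum_add : ∀ n, Summable (opDiag e (A n + A₀)) := fun n => by
    rw [opDiag_add]
    exact (hsum n).add hsum₀
  have htrace_add : ∀ n, ∑' i, opDiag e (A n + A₀) i
      = ∑' i, opDiag e (A n) i + ∑' i, opDiag e A₀ i := fun n => by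
    simp only [opDiag_add, Pi.add_apply, (hsum n).tsum_add hsum₀]
  have htight : IsTightAlong (fun n => opDiag e (A n + A₀)) l := by
    refine isTightAlong_of_eventually_tsum_lt (f₀ := opDiag e A₀ + opDiag e A₀)
      (fun n => opDiag_nonneg e ((hA n).add hA₀)) hsum_add (hsum₀.add hsum₀) (fun i => ?_)
      fun ε hε => ?_
    · simp only [opDiag_add]
      exact ((Complex.continuous_re.tendsto _).comp (hentry i i)).add_const (opDiag e A₀ i)
    · filter_upwards [hmass ε hε] with n hn
      simp only [htrace_add, Pi.add_apply, hsum₀.tsum_add hsum₀]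
      linarith
  have hbound : ∀ᶠ n in l, ∑' i, opDiag e (A n + A₀) i ≤ 2 * ∑' i, opDiag e A₀ i + 1 := by
    filter_upwards [hmass 1 one_pos] with n hn
    linarith [htrace_add n]
  refine tendsto_traceNorm_zero_of_formDominated (fun n => formDominated_sub_add (hA n) hA₀)
    (fun n => (hA n).add hA₀) hsum_add hbound htight fun i j => ?_
  simpa only [sub_apply, inner_sub_right, sub_self] using
    (hentry i j).sub_const (inner ℂ (e j) (A₀ (e i)))

end FormDomination

section WeakStar

variable {e : HilbertBasis ℕ ℂ H} {B : H →L[ℂ] H}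

omit [CompleteSpace H] in
theorem re_opTrace (e : HilbertBasis ℕ ℂ H) (hB : B.IsPositive) :
    (opTrace e B).re = ∑' i, opDiag e B i := by
  have hreal : ∀ i, inner ℂ (e i) (B (e i)) = (opDiag e B i : ℂ) := fun i =>
    (hB.isSymmetric.coe_re_inner_self_apply (e i)).symm
  simp only [opTrace, hreal, ← Complex.ofReal_tsum, Complex.ofReal_re]

omit [CompleteSpace H] in
theorem opTrace_comp_rankOne (e : HilbertBasis ℕ ℂ H) (B : H →L[ℂ] H) (x y : H) :
    opTrace e (B ∘L InnerProductSpace.rankOne ℂ x y) = inner ℂ y (B x) := by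
  rw [← e.tsum_inner_mul_inner y (B x)]
  simp [opTrace, InnerProductSpace.rankOne_apply]

theorem exists_clm_eq_opTrace_comp (hB : B.IsPositive) (hsum : Summable (opDiag e B)) :
    ∃ φ : (H →L[ℂ] H) →L[ℂ] ℂ, ∀ K, φ K = opTrace e (B ∘L K) := by
  have hnorm : ∀ K : H →L[ℂ] H, Summable fun i => ‖inner ℂ (e i) ((B ∘L K) (e i))‖ := fun K =>
    summable_of_sum_le (fun _ => norm_nonneg _) (sum_norm_inner_comp_le hB hsum K)
  let φ : (H →L[ℂ] H) →ₗ[ℂ] ℂ :=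
    { toFun := fun K => opTrace e (B ∘L K)
      map_add' := fun K L => by
        simpa [opTrace, inner_add_right] using
          (hnorm K).of_norm.tsum_add (hnorm L).of_norm
      map_smul' := fun c K => by
        simp [opTrace, tsum_mul_left] }
  refine ⟨φ.mkContinuous (∑' i, opDiag e B i) fun K => ?_, fun K => rfl⟩
  calc ‖opTrace e (B ∘L K)‖ ≤ ∑' i, ‖inner ℂ (e i) ((B ∘L K) (e i))‖ :=
        norm_tsum_le_tsum_norm (hnorm K)
    _ ≤ ‖K‖ * ∑' i, opDiag e B i :=
        Real.tsum_le_of_sum_le (fun _ => norm_nonneg _) (sum_norm_inner_comp_le hB hsum K)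
    _ = (∑' i, opDiag e B i) * ‖K‖ := mul_comm _ _

theorem exists_tsum_opDiag_le_of_forall_compact {α : Type*} {A : α → H →L[ℂ] H}
    (hA : ∀ n, (A n).IsPositive) (hsum : ∀ n, Summable (opDiag e (A n)))
    (hbdd : ∀ K : H →L[ℂ] H, IsCompactOperator K → ∃ C, ∀ n, ‖opTrace e (A n ∘L K)‖ ≤ C) :
    ∃ C, ∀ n, ∑' i, opDiag e (A n) i ≤ C := by
  choose φ hφ using fun n => exists_clm_eq_opTrace_comp (hA n) (hsum n)
  let 𝒦 : Submodule ℂ (H →L[ℂ] H) := compactOperator (RingHom.id ℂ) H H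
  have hcomplete : CompleteSpace 𝒦 := isClosed_setOfPred_isCompactOperator.completeSpace_coe
  obtain ⟨C, hC⟩ := banach_steinhaus (g := fun n => φ n ∘L 𝒦.subtypeL) fun K => by
    simpa [hφ] using hbdd K K.2
  refine ⟨C, fun n => Real.tsum_le_of_sum_le (opDiag_nonneg e (hA n)) fun s => ?_⟩
  let P : 𝒦 := ∑ i ∈ s, ⟨InnerProductSpace.rankOne ℂ (e i) (e i), isCompactOperator_rankOne _ _⟩
  have hP_coe : (P : H →L[ℂ] H) = ∑ i ∈ s, InnerProductSpace.rankOne ℂ (e i) (e i) := by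
    simp [P]
  have hP_norm : ‖P‖ ≤ 1 := by
    change ‖(P : H →L[ℂ] H)‖ ≤ 1
    rw [hP_coe]
    exact norm_sum_rankOne_self_le_one e.orthonormal s
  calc ∑ i ∈ s, opDiag e (A n) i = (φ n P).re := by
        rw [hP_coe, map_sum, Complex.re_sum]
        simp only [hφ, opTrace_comp_rankOne, opDiag]
    _ ≤ ‖(φ n ∘L 𝒦.subtypeL) P‖ := Complex.re_le_norm _
    _ ≤ ‖φ n ∘L 𝒦.subtypeL‖ * ‖P‖ := ContinuousLinearMap.le_opNorm _ _
    _ ≤ C * 1 := mul_le_mul (hC n) hP_norm (norm_nonneg _) ((norm_nonneg _).trans (hC n))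
    _ = C := mul_one C

end WeakStar

/-- If `0 ≤ Aₙ` are trace-class operators on a separable Hilbert space,
`Aₙ ⇀ A` weakly-* in the trace class (i.e. `tr[Aₙ K] → tr[A K]` for every compact `K`), and
`limsupₙ tr Aₙ ≤ tr A`, then `Aₙ → A` strongly in trace norm. -/
theorem traceNorm_tendsto_of_weakStar_and_limsup_trace_le
    (e : HilbertBasis ℕ ℂ H)
    (A : ℕ → H →L[ℂ] H) (Alim : H →L[ℂ] H)
    (hpos : ∀ n, (A n).IsPositive) (hposlim : Alim.IsPositive)
    (htc : ∀ n, Summable fun i => (inner (𝕜 := ℂ) (e i) (A n (e i))).re)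
    (htclim : Summable fun i => (inner (𝕜 := ℂ) (e i) (Alim (e i))).re)
    (hweak : ∀ K : H →L[ℂ] H, IsCompactOperator K →
      Tendsto (fun n => opTrace e (A n ∘L K)) atTop (nhds (opTrace e (Alim ∘L K))))
    (hlimsup : Filter.limsup (fun n => (opTrace e (A n)).re) atTop ≤ (opTrace e Alim).re) :
    Tendsto (fun n => traceNorm e (A n - Alim)) atTop (nhds 0) := by
  have hentry : ∀ i j, Tendsto (fun n => inner ℂ (e j) (A n (e i))) atTop
      (nhds (inner ℂ (e j) (Alim (e i)))) := fun i j => by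
    simpa only [opTrace_comp_rankOne] using hweak _ (isCompactOperator_rankOne (e i) (e j))
  obtain ⟨C, hC⟩ := exists_tsum_opDiag_le_of_forall_compact hpos htc fun K hK => by
    obtain ⟨C, hC⟩ := (hweak K hK).norm.bddAbove_range
    exact ⟨C, fun n => hC ⟨n, rfl⟩⟩
  refine tendsto_traceNorm_sub_zero hpos hposlim htc htclim hentry fun ε hε => ?_
  simp only [re_opTrace e (hpos _), re_opTrace e hposlim] at hlimsup
  exact eventually_lt_of_limsup_lt (hlimsup.trans_lt (lt_add_of_pos_right _ hε))
    (isBoundedUnder_of ⟨C, hC⟩)
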